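/- Let F, G ∈ H₂^{d×d} satisfy F*(e^{iθ})(F*(e^{iθ}))^H = G*(e^{iθ})(G*(e^{iθ}))^H for almost every θ ∈ [0, 2π), and suppose F is outer (so that in particular det F(z) ≠ 0 for z ∈ 𝔻 and F(z) is invertible on 𝔻). Then the matrix function U(z) = F(z)^{-1} G(z), analytic on 𝔻, belongs to H_∞^{d×d} and is an inner matrix function: U*(e^{iθ})(U*(e^{iθ}))^H = I_d for almost every θ. -/

import Mathlib

open Complex MeasureTheory Filter Set Matrix
open Metric Real
open scoped Topology NNReal ENNReal

/-!
Write `U = (det F)⁻¹ • (adj F * G)`. On the circle the identity `F* F*ᴴ = G* G*ᴴ` makes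
`(F*)⁻¹ G*` unitary, so its entries have norm at most one and the entries of `adj F * G` are
dominated there by `det F*`. These entries and `det F` are polynomials in functions of `H₂`, so
they may leave `H₂`, but they stay in the Smirnov class `N⁺`, which is an algebra.

For `h ∈ N⁺` uniform integrability of `log⁺ ‖h (r ·)‖` permits passing to the limit `r → 1` in the
Poisson–Jensen inequality, so an integrable `w` with `log ‖h*‖ ≤ w` a.e. satisfies
`log ‖h z‖ ≤ P[w] z`. For an outer function `f` equality `log ‖f z‖ = P[log ‖f*‖] z` at the origin
propagates to the whole disk by the maximum principle. Hence a function of `N⁺` that is dominated by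
an outer function on the circle is dominated by it on the disk, which bounds `U`.
-/

section UniformIntegrability

variable {α ι E : Type*} {m : MeasurableSpace α} {μ : Measure α} [NormedAddCommGroup E]
  {f : ι → α → E} {p : ℝ≥0∞}

theorem uniformIntegrable_add {g : ι → α → E} (hp : 1 ≤ p) (hf : UniformIntegrable f p μ)
    (hg : UniformIntegrable g p μ) : UniformIntegrable (fun i x => f i x + g i x) p μ := by
  obtain ⟨hfm, hfu, C, hfC⟩ := hf
  obtain ⟨hgm, hgu, D, hgD⟩ := hg
  refine ⟨fun i => (hfm i).add (hgm i), hfu.add hgu hp hfm hgm, C + D, fun i => ?_⟩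
  exact (eLpNorm_add_le (hfm i) (hgm i) hp).trans
    ((add_le_add (hfC i) (hgD i)).trans_eq (ENNReal.coe_add C D).symm)

theorem uniformIntegrable_of_norm_le {F : Type*} [NormedAddCommGroup F] {g : ι → α → F}
    (hf : UniformIntegrable f p μ) (hg : ∀ i, AEStronglyMeasurable (g i) μ)
    (hgf : ∀ i x, ‖g i x‖ ≤ ‖f i x‖) : UniformIntegrable g p μ := by
  obtain ⟨-, hfu, C, hfC⟩ := hf
  refine ⟨hg, fun ε hε => ?_, C, fun i => (eLpNorm_mono (hgf i)).trans (hfC i)⟩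
  obtain ⟨δ, hδ, hδε⟩ := hfu hε
  refine ⟨δ, hδ, fun i s hs hμs => (eLpNorm_mono fun x => ?_).trans (hδε i s hs hμs)⟩
  simpa only [norm_indicator_eq_indicator_norm] using indicator_le_indicator (hgf i x)

-- The de la Vallée-Poussin criterion: `G` is integrated uniformly, and `f` is `o(G)`.
theorem uniformIntegrable_of_lintegral_le [IsFiniteMeasure μ] {G : ι → α → ℝ≥0∞} {C : ℝ≥0}
    (hf : ∀ i, AEStronglyMeasurable (f i) μ) (hG : ∀ i, ∫⁻ x, G i x ∂μ ≤ C)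
    (hfG : ∀ ε : ℝ≥0, 0 < ε → ∃ K : ℝ≥0, ∀ i x, ‖f i x‖ₑ ≤ K + ε * G i x) :
    UniformIntegrable f 1 μ := by
  have setLIntegral_le {ε K : ℝ≥0} (hK : ∀ i x, ‖f i x‖ₑ ≤ K + ε * G i x) (i : ι) (s : Set α) :
      ∫⁻ x in s, ‖f i x‖ₑ ∂μ ≤ K * μ s + ε * C := calc
    ∫⁻ x in s, ‖f i x‖ₑ ∂μ ≤ ∫⁻ x in s, (K + ε * G i x) ∂μ := lintegral_mono (hK i)
    _ = K * μ s + ε * ∫⁻ x in s, G i x ∂μ := by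
      rw [lintegral_add_left measurable_const, setLIntegral_const,
        lintegral_const_mul' _ _ ENNReal.coe_ne_top]
    _ ≤ K * μ s + ε * C := by gcongr; exact (setLIntegral_le_lintegral _ _).trans (hG i)
  refine ⟨hf, fun η hη => ?_, ?_⟩
  · lift η to ℝ≥0 using hη.le
    have half_bound (a : ℝ≥0) : a * (η / (2 * (a + 1))) ≤ η / 2 := by
      rw [mul_div_left_comm, mul_comm 2, ← div_div, ← mul_div_assoc]
      gcongr
      exact mul_le_of_le_one_right' (div_le_one_of_le₀ le_self_add zero_le)
    obtain ⟨K, hK⟩ := hfG (η / (2 * (C + 1))) (div_pos (mod_cast hη) (by positivity))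
    refine ⟨η / (2 * (K + 1)), div_pos hη (by positivity), fun i s hs hμs => ?_⟩
    rw [eLpNorm_indicator_eq_eLpNorm_restrict hs, eLpNorm_one_eq_lintegral_enorm,
      ENNReal.ofReal_coe_nnreal]
    calc ∫⁻ x in s, ‖f i x‖ₑ ∂μ
        ≤ K * μ s + ↑(η / (2 * (C + 1))) * C := setLIntegral_le hK i s
      _ ≤ K * ↑(η / (2 * (K + 1))) + ↑(η / (2 * (C + 1))) * C := by
        gcongr
        exact hμs.trans_eq (ENNReal.ofReal_coe_nnreal (p := η / (2 * (K + 1))))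
      _ ≤ η := by
        rw [mul_comm (ENNReal.ofNNReal (η / (2 * (C + 1))))]
        exact_mod_cast (add_le_add (half_bound K) (half_bound C)).trans_eq (add_halves η)
  · obtain ⟨K, hK⟩ := hfG 1 one_pos
    refine ⟨K * (μ univ).toNNReal + 1 * C, fun i => ?_⟩
    rw [eLpNorm_one_eq_lintegral_enorm, ← setLIntegral_univ]
    refine (setLIntegral_le hK i univ).trans_eq ?_
    push_cast
    rw [ENNReal.coe_toNNReal (measure_ne_top μ univ)]

end UniformIntegrability

section SmirnovClass

/-- Arc length on the unit circle in the angular coordinate; `CircleIntegrable h 0 1` means that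
`fun θ => h (circleMap 0 1 θ)` is integrable with respect to it. -/
noncomputable abbrev arcLength : Measure ℝ := volume.restrict (Ioc 0 (2 * π))

theorem circleIntegrable_iff_integrable_arcLength {E : Type*} [NormedAddCommGroup E]
    {h : ℂ → E} :
    CircleIntegrable h 0 1 ↔ Integrable (fun θ => h (circleMap 0 1 θ)) arcLength :=
  intervalIntegrable_iff_integrableOn_Ioc_of_le two_pi_pos.le

theorem circleMap_mul_mem_ball {r : ℝ} (hr : r ∈ Ico (0 : ℝ) 1) (θ : ℝ) :
    r * circleMap 0 1 θ ∈ ball (0 : ℂ) 1 := by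
  simpa [abs_of_nonneg hr.1] using hr.2

theorem continuous_comp_mul_circleMap {h : ℂ → ℂ} (hh : ContinuousOn h (ball 0 1)) {r : ℝ}
    (hr : r ∈ Ico (0 : ℝ) 1) : Continuous fun θ => h (r * circleMap 0 1 θ) :=
  hh.comp_continuous (by fun_prop) (circleMap_mul_mem_ball hr)

/-- The Smirnov class `N⁺` of the unit disk, as a subalgebra of all functions `ℂ → ℂ` (only the
values on the disk matter): holomorphic functions `h` for which the family `log⁺ ‖h (r ·)‖`,
`0 ≤ r < 1`, is uniformly integrable on the unit circle. -/
noncomputable def smirnovClass : Subalgebra ℂ (ℂ → ℂ) where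
  carrier := {h | DifferentiableOn ℂ h (ball 0 1) ∧
    UniformIntegrable (fun (r : Ico (0 : ℝ) 1) θ => log⁺ ‖h (r * circleMap 0 1 θ)‖) 1 arcLength}
  algebraMap_mem' c := by
    exact ⟨differentiableOn_const c,
      uniformIntegrable_const le_rfl ENNReal.one_ne_top (memLp_const (log⁺ ‖c‖))⟩
  add_mem' := by
    rintro f g ⟨hf, hfU⟩ ⟨hg, hgU⟩
    have hfg := hf.add hg
    have hlog_two := uniformIntegrable_const (ι := Ico (0 : ℝ) 1) le_rfl ENNReal.one_ne_top
      (memLp_const (Real.log 2) (p := 1) (μ := arcLength))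
    refine ⟨hfg, uniformIntegrable_of_norm_le
      (uniformIntegrable_add le_rfl (uniformIntegrable_add le_rfl hfU hgU) hlog_two)
      (fun r => ?_) fun r θ => ?_⟩
    · exact (continuous_posLog.comp
        (continuous_comp_mul_circleMap hfg.continuousOn r.2).norm).aestronglyMeasurable
    · rw [norm_of_nonneg posLog_nonneg]
      exact (posLog_norm_add_le _ _).trans (le_norm_self _)
  mul_mem' := by
    rintro f g ⟨hf, hfU⟩ ⟨hg, hgU⟩
    have hfg := hf.mul hg
    refine ⟨hfg, uniformIntegrable_of_norm_le (uniformIntegrable_add le_rfl hfU hgU)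
      (fun r => ?_) fun r θ => ?_⟩
    · exact (continuous_posLog.comp
        (continuous_comp_mul_circleMap hfg.continuousOn r.2).norm).aestronglyMeasurable
    · rw [norm_of_nonneg posLog_nonneg, Pi.mul_apply, norm_mul]
      exact posLog_mul.trans (le_norm_self _)

theorem posLog_le_add_mul_rpow {p ε x : ℝ} (hp : 0 < p) (hε : 0 < ε) (hx : 0 ≤ x) :
    log⁺ x ≤ log⁺ (p * ε)⁻¹ / p + ε * x ^ p := by
  have hlog : log⁺ (x ^ p) = p * log⁺ x := by
    rcases hx.eq_or_lt with rfl | hx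
    · simp [zero_rpow hp.ne']
    · simp only [posLog_apply, log_rpow hx, mul_max_of_nonneg _ _ hp.le, mul_zero]
  have hle : log⁺ (p * ε * x ^ p) ≤ p * ε * x ^ p := by
    rw [posLog_apply]
    exact max_le (by positivity) (log_le_self (by positivity))
  have hmul : log⁺ (x ^ p) ≤ log⁺ (p * ε)⁻¹ + log⁺ (p * ε * x ^ p) := by
    refine le_of_eq_of_le ?_ posLog_mul
    rw [inv_mul_cancel_left₀ (by positivity)]
  rw [← mul_le_mul_iff_right₀ hp, mul_add, mul_div_cancel₀ _ hp.ne', ← hlog]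
  linarith

theorem mem_smirnovClass_of_lintegral_rpow_le {h : ℂ → ℂ} {p : ℝ} {C : ℝ≥0} (hp : 0 < p)
    (hh : DifferentiableOn ℂ h (ball 0 1))
    (hC : ∀ r ∈ Ico (0 : ℝ) 1, ∫⁻ θ, ‖h (r * circleMap 0 1 θ)‖ₑ ^ p ∂arcLength ≤ C) :
    h ∈ smirnovClass := by
  refine ⟨hh, uniformIntegrable_of_lintegral_le (fun r => ?_) (fun r => hC r r.2)
    fun ε hε => ⟨(log⁺ (p * ε)⁻¹ / p).toNNReal, fun r θ => ?_⟩⟩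
  · exact (continuous_posLog.comp
      (continuous_comp_mul_circleMap hh.continuousOn r.2).norm).aestronglyMeasurable
  · have hlog := posLog_le_add_mul_rpow hp hε (norm_nonneg (h (r * circleMap 0 1 θ)))
    rw [← ENNReal.ofReal_coe_nnreal (p := ε), enorm_eq_ofReal posLog_nonneg, ← ofReal_norm,
      ENNReal.ofReal_rpow_of_nonneg (norm_nonneg _) hp.le, ← ENNReal.ofReal_mul (by positivity)]
    refine (ENNReal.ofReal_le_ofReal hlog).trans ENNReal.ofReal_add_le

end SmirnovClass

section HardySpaceTwo

variable {a : ℕ → ℂ} {f : ℂ → ℂ}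

theorem differentiableOn_ball_of_hasSum
    (hf : ∀ z ∈ ball (0 : ℂ) 1, HasSum (fun n => z ^ n * a n) (f z)) :
    DifferentiableOn ℂ f (ball 0 1) := by
  intro z hz
  obtain ⟨r, hr, hr_lt⟩ := exists_between (mem_ball_zero_iff.1 hz)
  have hr_nonneg : 0 ≤ r := (norm_nonneg z).trans hr.le
  have hsub : ball (0 : ℂ) r ⊆ ball 0 1 := ball_subset_ball hr_lt.le
  have hsummable : Summable fun n => ‖(r : ℂ) ^ n * a n‖ :=
    (hf r (by simpa [abs_of_nonneg hr_nonneg] using hr_lt)).summable.norm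
  have htsum : DifferentiableOn ℂ (fun w => ∑' n, w ^ n * a n) (ball 0 r) := by
    refine differentiableOn_tsum_of_summable_norm hsummable (fun n => by fun_prop) isOpen_ball
      fun n w hw => ?_
    simp only [norm_mul, norm_pow, norm_real, norm_of_nonneg hr_nonneg]
    gcongr
    exact (mem_ball_zero_iff.1 hw).le
  have hfr : DifferentiableOn ℂ f (ball 0 r) :=
    htsum.congr fun w hw => (hf w (hsub hw)).tsum_eq.symm
  exact (hfr.differentiableAt
    (isOpen_ball.mem_nhds (mem_ball_zero_iff.2 hr))).differentiableWithinAt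

theorem lintegral_enorm_eval_circleMap_sq (p : Polynomial ℂ) :
    ∫⁻ θ, ‖p.eval (circleMap 0 1 θ)‖ₑ ^ 2 ∂arcLength =
      ENNReal.ofReal (2 * π * ∑ n ∈ p.support, ‖p.coeff n‖ ^ 2) := by
  have hint : IntervalIntegrable (fun θ => ‖p.eval (circleMap 0 1 θ)‖ ^ 2) volume 0 (2 * π) :=
    Continuous.intervalIntegrable (by fun_prop) _ _
  rw [p.sum_sq_norm_coeff_eq_circleAverage, circleAverage_def, smul_eq_mul,
    mul_inv_cancel_left₀ two_pi_pos.ne', intervalIntegral.integral_of_le two_pi_pos.le,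
    ofReal_integral_eq_lintegral_ofReal hint.1 (ae_of_all _ fun θ => by positivity)]
  simp only [ENNReal.ofReal_pow (norm_nonneg _), ofReal_norm]

theorem lintegral_enorm_sq_le_of_hasSum
    (hf : ∀ z ∈ ball (0 : ℂ) 1, HasSum (fun n => z ^ n * a n) (f z))
    (ha : Summable fun n => ‖a n‖ ^ 2) {r : ℝ} (hr : r ∈ Ico (0 : ℝ) 1) :
    ∫⁻ θ, ‖f (r * circleMap 0 1 θ)‖ₑ ^ 2 ∂arcLength ≤
      ENNReal.ofReal (2 * π * ∑' n, ‖a n‖ ^ 2) := by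
  let p (N : ℕ) : Polynomial ℂ :=
    ∑ n ∈ Finset.range N, Polynomial.monomial n ((r : ℂ) ^ n * a n)
  have p_coeff (N n : ℕ) : ‖(p N).coeff n‖ ≤ ‖a n‖ := by
    by_cases hn : n < N
    · simpa [p, Polynomial.coeff_monomial, hn, abs_of_nonneg hr.1] using
        mul_le_of_le_one_left (norm_nonneg (a n)) (pow_le_one₀ hr.1 hr.2.le)
    · simp [p, Polynomial.coeff_monomial, hn]
  have p_tendsto (θ : ℝ) : Tendsto (fun N => ‖(p N).eval (circleMap 0 1 θ)‖ₑ ^ 2) atTop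
      (𝓝 (‖f (r * circleMap 0 1 θ)‖ₑ ^ 2)) := by
    refine ((ENNReal.continuous_pow 2).comp continuous_enorm).continuousAt.tendsto.comp
      ((hf _ (circleMap_mul_mem_ball hr θ)).tendsto_sum_nat.congr fun N => ?_)
    simp only [p, Polynomial.eval_finsetSum, Polynomial.eval_monomial, mul_pow, mul_right_comm]
  calc ∫⁻ θ, ‖f (r * circleMap 0 1 θ)‖ₑ ^ 2 ∂arcLength
      = ∫⁻ θ, liminf (fun N => ‖(p N).eval (circleMap 0 1 θ)‖ₑ ^ 2) atTop ∂arcLength := by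
        simp only [(p_tendsto _).liminf_eq]
    _ ≤ liminf (fun N => ∫⁻ θ, ‖(p N).eval (circleMap 0 1 θ)‖ₑ ^ 2 ∂arcLength) atTop :=
        lintegral_liminf_le fun N =>
          ((p N).continuous.comp (continuous_circleMap 0 1)).measurable.enorm.pow_const 2
    _ ≤ ENNReal.ofReal (2 * π * ∑' n, ‖a n‖ ^ 2) := by
        refine liminf_le_of_le (by isBoundedDefault) fun b hb => ?_
        obtain ⟨N, hN⟩ := hb.exists
        refine hN.trans ?_
        rw [lintegral_enorm_eval_circleMap_sq]
        gcongr
        exact (Finset.sum_le_sum fun n _ => pow_le_pow_left₀ (norm_nonneg _) (p_coeff N n) 2).trans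
          (ha.sum_le_tsum _ fun n _ => by positivity)

theorem mem_smirnovClass_of_summable_sq
    (hf : ∀ z ∈ ball (0 : ℂ) 1, HasSum (fun n => z ^ n * a n) (f z))
    (ha : Summable fun n => ‖a n‖ ^ 2) : f ∈ smirnovClass := by
  refine mem_smirnovClass_of_lintegral_rpow_le (C := (2 * π * ∑' n, ‖a n‖ ^ 2).toNNReal) two_pos
    (differentiableOn_ball_of_hasSum hf) fun r hr => ?_
  simp only [ENNReal.rpow_two]
  exact lintegral_enorm_sq_le_of_hasSum hf ha hr

end HardySpaceTwo

section PoissonIntegral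

theorem continuousOn_poissonKernel_sphere {z : ℂ} (hz : z ∈ ball (0 : ℂ) 1) :
    ContinuousOn (poissonKernel 0 z) (sphere 0 1) := by
  rw [poissonKernel_eq_re_herglotzRieszKernel]
  exact continuous_re.comp_continuousOn
    (by simpa using continuousOn_herglotzRieszKernel_sphere (R := 1) hz)

theorem poissonKernel_nonneg {z ζ : ℂ} (hz : z ∈ ball (0 : ℂ) 1) (hζ : ζ ∈ sphere (0 : ℂ) 1) :
    0 ≤ poissonKernel 0 z ζ := by
  rw [mem_ball_zero_iff] at hz
  rw [poissonKernel_def, sub_zero, sub_zero, mem_sphere_zero_iff_norm.1 hζ]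
  have := pow_le_one₀ (norm_nonneg z) hz.le (n := 2)
  exact div_nonneg (by linarith) (by positivity)

theorem poissonKernel_zero_of_mem_sphere {ζ : ℂ} (hζ : ζ ∈ sphere (0 : ℂ) 1) :
    poissonKernel 0 0 ζ = 1 := by
  simp [poissonKernel_def, mem_sphere_zero_iff_norm.1 hζ]

/-- The Poisson integral over the unit circle: the harmonic extension of `u` to the disk. -/
noncomputable def poissonIntegral (u : ℂ → ℝ) (z : ℂ) : ℝ :=
  circleAverage (fun ζ => poissonKernel 0 z ζ * u ζ) 0 1

variable {u v : ℂ → ℝ} {z : ℂ}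

theorem poissonIntegral_eq_integral (u : ℂ → ℝ) (z : ℂ) : poissonIntegral u z =
    (2 * π)⁻¹ * ∫ θ, poissonKernel 0 z (circleMap 0 1 θ) * u (circleMap 0 1 θ) ∂arcLength := by
  rw [poissonIntegral, circleAverage_def, smul_eq_mul,
    intervalIntegral.integral_of_le two_pi_pos.le]

theorem poissonIntegral_zero (u : ℂ → ℝ) : poissonIntegral u 0 = circleAverage u 0 1 :=
  circleAverage_congr_sphere fun ζ hζ => by
    rw [abs_one] at hζ
    simp only [poissonKernel_zero_of_mem_sphere hζ, one_mul]

theorem circleIntegrable_poissonKernel_mul (hu : CircleIntegrable u 0 1)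
    (hz : z ∈ ball (0 : ℂ) 1) : CircleIntegrable (fun ζ => poissonKernel 0 z ζ * u ζ) 0 1 :=
  hu.continuousOn_smul (by simpa using continuousOn_poissonKernel_sphere hz)

theorem poissonIntegral_congr (huv : ∀ᵐ θ ∂arcLength, u (circleMap 0 1 θ) = v (circleMap 0 1 θ))
    (z : ℂ) : poissonIntegral u z = poissonIntegral v z := by
  simp only [poissonIntegral_eq_integral]
  congr 1
  refine integral_congr_ae ?_
  filter_upwards [huv] with θ hθ
  rw [hθ]

theorem poissonIntegral_mono (hu : CircleIntegrable u 0 1) (hv : CircleIntegrable v 0 1)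
    (huv : ∀ᵐ θ ∂arcLength, u (circleMap 0 1 θ) ≤ v (circleMap 0 1 θ))
    (hz : z ∈ ball (0 : ℂ) 1) : poissonIntegral u z ≤ poissonIntegral v z := by
  simp only [poissonIntegral_eq_integral]
  refine mul_le_mul_of_nonneg_left (integral_mono_ae
    (circleIntegrable_iff_integrable_arcLength.1 (circleIntegrable_poissonKernel_mul hu hz))
    (circleIntegrable_iff_integrable_arcLength.1 (circleIntegrable_poissonKernel_mul hv hz)) ?_)
    (by positivity)
  filter_upwards [huv] with θ hθ
  exact mul_le_mul_of_nonneg_left hθ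
    (poissonKernel_nonneg hz (circleMap_mem_sphere 0 zero_le_one θ))

theorem poissonIntegral_add (hu : CircleIntegrable u 0 1) (hv : CircleIntegrable v 0 1)
    (hz : z ∈ ball (0 : ℂ) 1) :
    poissonIntegral (fun ζ => u ζ + v ζ) z = poissonIntegral u z + poissonIntegral v z := by
  simp only [poissonIntegral, mul_add]
  exact circleAverage_fun_add (circleIntegrable_poissonKernel_mul hu hz)
    (circleIntegrable_poissonKernel_mul hv hz)

theorem poissonIntegral_re {g : ℂ → ℂ} (hg : DiffContOnCl ℂ g (ball 0 1))
    (hz : z ∈ ball (0 : ℂ) 1) : poissonIntegral (fun ζ => (g ζ).re) z = (g z).re := by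
  have hint : CircleIntegrable (poissonKernel 0 z • g) 0 1 :=
    ((hg.continuousOn_ball.mono sphere_subset_closedBall).circleIntegrable
      zero_le_one).continuousOn_smul (by simpa using continuousOn_poissonKernel_sphere hz)
  have hre := reCLM.circleAverage_comp_comm hint
  rw [← hg.circleAverage_poissonKernel_smul hz]
  simpa [poissonIntegral, Function.comp_def] using hre

theorem poissonIntegral_const (c : ℝ) (hz : z ∈ ball (0 : ℂ) 1) :
    poissonIntegral (fun _ => c) z = c := by
  simpa only [ofReal_re] using poissonIntegral_re (g := fun _ => (c : ℂ)) diffContOnCl_const hz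

theorem tendsto_poissonIntegral {u : ℕ → ℂ → ℝ}
    (hu : UniformIntegrable (fun n θ => u n (circleMap 0 1 θ)) 1 arcLength)
    (huv : ∀ᵐ θ ∂arcLength,
      Tendsto (fun n => u n (circleMap 0 1 θ)) atTop (𝓝 (v (circleMap 0 1 θ))))
    (hz : z ∈ ball (0 : ℂ) 1) :
    Tendsto (fun n => poissonIntegral (u n) z) atTop (𝓝 (poissonIntegral v z)) := by
  have hv : CircleIntegrable v 0 1 :=
    circleIntegrable_iff_integrable_arcLength.2 (hu.integrable_of_ae_tendsto huv)
  have hun (n : ℕ) : CircleIntegrable (u n) 0 1 :=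
    circleIntegrable_iff_integrable_arcLength.2 (memLp_one_iff_integrable.1 (hu.memLp n))
  have hL1 := tendsto_Lp_finite_of_tendsto_ae le_rfl ENNReal.one_ne_top hu.1
    (hu.memLp_of_ae_tendsto huv) hu.2.1 huv
  obtain ⟨K, hK⟩ := (isCompact_sphere (0 : ℂ) 1).exists_bound_of_continuousOn
    (continuousOn_poissonKernel_sphere hz)
  simp only [poissonIntegral_eq_integral]
  refine (tendsto_integral_of_L1' _
    (circleIntegrable_iff_integrable_arcLength.1
      (circleIntegrable_poissonKernel_mul hv hz)).aestronglyMeasurable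
    (Eventually.of_forall fun n => circleIntegrable_iff_integrable_arcLength.1
      (circleIntegrable_poissonKernel_mul (hun n) hz)) ?_).const_mul _
  refine tendsto_of_tendsto_of_tendsto_of_le_of_le tendsto_const_nhds
    (by simpa using ENNReal.Tendsto.const_mul hL1 (Or.inr ENNReal.ofReal_ne_top))
    (fun n => zero_le) fun n =>
      eLpNorm_le_mul_eLpNorm_of_ae_le_mul (c := K) (ae_of_all _ fun θ => ?_) 1
  rw [Pi.sub_apply, Pi.sub_apply, ← mul_sub, norm_mul]
  exact mul_le_mul_of_nonneg_right (hK _ (circleMap_mem_sphere 0 zero_le_one θ)) (norm_nonneg _)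

end PoissonIntegral

section PoissonJensen

theorem exists_eq_add_conj_of_mem_span_fourier {T : C(AddCircle (2 * π), ℂ)}
    (hT : T ∈ Submodule.span ℂ (range (fourier (T := 2 * π)))) :
    ∃ g k : ℂ → ℂ, Differentiable ℂ g ∧ Differentiable ℂ k ∧
      ∀ t, T t = g (AddCircle.toCircle t) + star (k (AddCircle.toCircle t)) := by
  induction hT using Submodule.span_induction with
  | mem x hx =>
    obtain ⟨n, rfl⟩ := hx
    obtain ⟨m, rfl | rfl⟩ := n.eq_nat_or_neg
    · exact ⟨fun z => z ^ m, 0, by fun_prop, by fun_prop, fun t => by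
        simp [fourier_apply, AddCircle.toCircle_nsmul]⟩
    · exact ⟨0, fun z => z ^ m, by fun_prop, by fun_prop, fun t => by
        simp [fourier_apply, AddCircle.toCircle_nsmul, AddCircle.toCircle_neg,
          ← Circle.coe_inv_eq_conj]⟩
  | zero => exact ⟨0, 0, by fun_prop, by fun_prop, fun t => by simp⟩
  | add x y _ _ hx hy =>
    obtain ⟨g, k, hg, hk, hx⟩ := hx
    obtain ⟨g', k', hg', hk', hy⟩ := hy
    refine ⟨g + g', k + k', hg.add hg', hk.add hk', fun t => ?_⟩
    simp only [ContinuousMap.add_apply, Pi.add_apply, hx, hy, star_add]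
    ring
  | smul c x _ hx =>
    obtain ⟨g, k, hg, hk, hx⟩ := hx
    refine ⟨c • g, star c • k, hg.const_smul c, hk.const_smul (star c), fun t => ?_⟩
    simp only [ContinuousMap.smul_apply, Pi.smul_apply, smul_eq_mul, hx, star_mul', star_star,
      mul_add]

theorem exists_toCircle_eq_of_mem_sphere {ζ : ℂ} (hζ : ζ ∈ sphere (0 : ℂ) 1) :
    ∃ t : AddCircle (2 * π), (AddCircle.toCircle t : ℂ) = ζ := by
  refine ⟨(AddCircle.homeomorphCircle two_pi_pos.ne').symm ⟨ζ, hζ⟩, ?_⟩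
  exact congrArg Subtype.val ((AddCircle.homeomorphCircle_apply two_pi_pos.ne' _).symm.trans
    ((AddCircle.homeomorphCircle two_pi_pos.ne').apply_symm_apply ⟨ζ, hζ⟩))

theorem exists_differentiable_abs_sub_re_lt {u : ℂ → ℝ} (hu : ContinuousOn u (sphere 0 1))
    {ε : ℝ} (hε : 0 < ε) :
    ∃ g : ℂ → ℂ, Differentiable ℂ g ∧ ∀ ζ ∈ sphere (0 : ℂ) 1, |u ζ - (g ζ).re| < ε := by
  have : Fact (0 < 2 * π) := ⟨two_pi_pos⟩
  let uCircle : C(AddCircle (2 * π), ℂ) := ⟨fun t => u (AddCircle.toCircle t),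
    continuous_ofReal.comp (hu.comp_continuous
      (continuous_subtype_val.comp AddCircle.continuous_toCircle) fun t =>
        mem_sphere_zero_iff_norm.2 (Circle.norm_coe _))⟩
  have hclosure : uCircle ∈
      (Submodule.span ℂ (range (fourier (T := 2 * π)))).topologicalClosure := by
    rw [span_fourier_closure_eq_top]
    exact Submodule.mem_top
  obtain ⟨T, hT, huT⟩ := Metric.mem_closure_iff.1 hclosure ε hε
  obtain ⟨g, k, hg, hk, hgk⟩ := exists_eq_add_conj_of_mem_span_fourier hT
  refine ⟨g + k, hg.add hk, fun ζ hζ => ?_⟩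
  obtain ⟨t, rfl⟩ := exists_toCircle_eq_of_mem_sphere hζ
  calc |u (AddCircle.toCircle t) - ((g + k) (AddCircle.toCircle t)).re|
      = |(uCircle t - T t).re| := by simp [uCircle, hgk]
    _ ≤ dist (uCircle t) (T t) := by rw [Complex.dist_eq]; exact abs_re_le_norm _
    _ < ε := (ContinuousMap.dist_apply_le_dist t).trans_lt huT

-- Compare `h` with the zero-free function `exp g`, where `re g` approximates `u` on the circle.
theorem norm_le_exp_poissonIntegral_of_forall_mem_sphere {h : ℂ → ℂ} {u : ℂ → ℝ} {z : ℂ}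
    (hh : DiffContOnCl ℂ h (ball 0 1)) (hu : ContinuousOn u (sphere 0 1))
    (hhu : ∀ ζ ∈ sphere (0 : ℂ) 1, ‖h ζ‖ ≤ Real.exp (u ζ)) (hz : z ∈ ball (0 : ℂ) 1) :
    ‖h z‖ ≤ Real.exp (poissonIntegral u z) := by
  have hu_int : CircleIntegrable u 0 1 := hu.circleIntegrable zero_le_one
  have approx (ε : ℝ) (hε : 0 < ε) : ‖h z‖ ≤ Real.exp (poissonIntegral u z + ε + ε) := by
    obtain ⟨g, hg, hgu⟩ := exists_differentiable_abs_sub_re_lt hu hε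
    have hre_int : CircleIntegrable (fun ζ => (g ζ).re) 0 1 :=
      (continuous_re.comp hg.continuous).continuousOn.circleIntegrable zero_le_one
    have hre : (g z).re ≤ poissonIntegral u z + ε := by
      rw [← poissonIntegral_re hg.diffContOnCl hz, ← poissonIntegral_const ε hz,
        ← poissonIntegral_add hu_int (circleIntegrable_const ε 0 1) hz]
      refine poissonIntegral_mono hre_int (hu_int.add (circleIntegrable_const ε 0 1))
        (ae_of_all _ fun θ => ?_) hz
      linarith [abs_lt.1 (hgu _ (circleMap_mem_sphere 0 zero_le_one θ))]
    have hquot : ‖h z * Complex.exp (-g z)‖ ≤ Real.exp ε := by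
      refine norm_le_of_forall_mem_frontier_norm_le isBounded_ball
        (hh.smul hg.neg.cexp.diffContOnCl) (fun ζ hζ => ?_) (subset_closure hz)
      rw [frontier_ball _ one_ne_zero] at hζ
      calc ‖h ζ * Complex.exp (-g ζ)‖ ≤ Real.exp (u ζ) * Real.exp (-(g ζ).re) := by
            rw [norm_mul, Complex.norm_exp, neg_re]
            gcongr
            exact hhu ζ hζ
        _ ≤ Real.exp ε := by
            rw [← Real.exp_add, Real.exp_le_exp]
            linarith [abs_lt.1 (hgu ζ hζ)]
    rw [norm_mul, Complex.norm_exp, neg_re, Real.exp_neg, ← div_eq_mul_inv,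
      div_le_iff₀ (Real.exp_pos _), ← Real.exp_add] at hquot
    exact hquot.trans (Real.exp_le_exp.2 (by linarith))
  have hcont : Continuous fun ε : ℝ => Real.exp (poissonIntegral u z + ε + ε) := by fun_prop
  exact ge_of_tendsto ((hcont.tendsto' 0 _ (by simp)).mono_left nhdsWithin_le_nhds)
    (eventually_mem_nhdsWithin.mono approx : ∀ᶠ ε in 𝓝[>] (0 : ℝ), _)

end PoissonJensen

section RadialLimit

/-- The radial limit `lim h (r ζ)` as `r → 1⁻`, with a junk value where the limit does not exist. -/
noncomputable def radialLimit (h : ℂ → ℂ) (ζ : ℂ) : ℂ :=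
  limUnder (𝓝[<] (1 : ℝ)) fun r : ℝ => h (r * ζ)

/-- The function `h` has the radial boundary value `b θ` at almost every point `exp (i θ)` of the
unit circle. -/
def HasBoundaryValues {E : Type*} [TopologicalSpace E] (h : ℂ → E) (b : ℝ → E) : Prop :=
  ∀ᵐ θ ∂arcLength, Tendsto (fun r : ℝ => h (r * circleMap 0 1 θ)) (𝓝[<] 1) (𝓝 (b θ))

/-- The function `h` has a radial limit at almost every point of the unit circle, as every
function of the Smirnov class does by Fatou's theorem. -/
def HasRadialLimits (h : ℂ → ℂ) : Prop :=
  HasBoundaryValues h fun θ => radialLimit h (circleMap 0 1 θ)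

variable {h : ℂ → ℂ} {b : ℝ → ℂ}

theorem HasBoundaryValues.hasRadialLimits (hb : HasBoundaryValues h b) : HasRadialLimits h :=
  hb.mono fun _ hθ => tendsto_nhds_limUnder ⟨_, hθ⟩

theorem HasBoundaryValues.radialLimit_ae_eq (hb : HasBoundaryValues h b) :
    ∀ᵐ θ ∂arcLength, radialLimit h (circleMap 0 1 θ) = b θ :=
  hb.mono fun _ hθ => hθ.limUnder_eq

theorem exists_seq_mem_Ico_tendsto_one :
    ∃ r : ℕ → ℝ, (∀ n, r n ∈ Ico (0 : ℝ) 1) ∧ Tendsto r atTop (𝓝[<] 1) := by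
  obtain ⟨r, -, hr, hr_tendsto⟩ := exists_seq_strictMono_tendsto' (zero_lt_one (α := ℝ))
  exact ⟨r, fun n => Ioo_subset_Ico_self (hr n),
    tendsto_nhdsWithin_iff.2 ⟨hr_tendsto, .of_forall fun n => (hr n).2⟩⟩

end RadialLimit

section SmirnovInequality

variable {h : ℂ → ℂ}

theorem tendsto_posLog_norm_comp_mul_circleMap (hlim : HasRadialLimits h) {r : ℕ → ℝ}
    (hr : Tendsto r atTop (𝓝[<] 1)) :
    ∀ᵐ θ ∂arcLength, Tendsto (fun n => log⁺ ‖h (r n * circleMap 0 1 θ)‖) atTop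
      (𝓝 (log⁺ ‖radialLimit h (circleMap 0 1 θ)‖)) :=
  Eventually.mono hlim fun _ hθ => (continuous_posLog.tendsto _).comp (hθ.comp hr).norm

theorem uniformIntegrable_posLog_norm_comp_mul_circleMap (hh : h ∈ smirnovClass) {r : ℕ → ℝ}
    (hr : ∀ n, r n ∈ Ico (0 : ℝ) 1) :
    UniformIntegrable (fun n θ => log⁺ ‖h (r n * circleMap 0 1 θ)‖) 1 arcLength := by
  obtain ⟨-, hmeas, hunif, C, hC⟩ := hh
  refine ⟨fun n => hmeas ⟨r n, hr n⟩, fun ε hε => ?_, C, fun n => hC ⟨r n, hr n⟩⟩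
  obtain ⟨δ, hδ, hδε⟩ := hunif hε
  exact ⟨δ, hδ, fun n => hδε ⟨r n, hr n⟩⟩

theorem circleIntegrable_posLog_norm_radialLimit (hh : h ∈ smirnovClass)
    (hlim : HasRadialLimits h) : CircleIntegrable (fun ζ => log⁺ ‖radialLimit h ζ‖) 0 1 := by
  obtain ⟨r, hr, hr_tendsto⟩ := exists_seq_mem_Ico_tendsto_one
  exact circleIntegrable_iff_integrable_arcLength.2
    ((uniformIntegrable_posLog_norm_comp_mul_circleMap hh hr).integrable_of_ae_tendsto
      (tendsto_posLog_norm_comp_mul_circleMap hlim hr_tendsto))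

theorem le_exp_posLog (x : ℝ) : x ≤ Real.exp (log⁺ x) :=
  (le_exp_log x).trans (Real.exp_le_exp.2 (le_max_right _ _))

theorem norm_le_exp_poissonIntegral_posLog_radialLimit (hh : h ∈ smirnovClass)
    (hlim : HasRadialLimits h) {z : ℂ} (hz : z ∈ ball (0 : ℂ) 1) :
    ‖h z‖ ≤ Real.exp (poissonIntegral (fun ζ => log⁺ ‖radialLimit h ζ‖) z) := by
  obtain ⟨r, hr, hr_tendsto⟩ := exists_seq_mem_Ico_tendsto_one
  have dilation_mem (n : ℕ) {w : ℂ} (hw : w ∈ closedBall (0 : ℂ) 1) :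
      r n * w ∈ ball (0 : ℂ) 1 := by
    rw [mem_ball_zero_iff, norm_mul, norm_real, norm_of_nonneg (hr n).1]
    exact mul_lt_one_of_nonneg_of_lt_one_left (hr n).1 (hr n).2 (mem_closedBall_zero_iff.1 hw)
  have dilation_differentiableOn (n : ℕ) :
      DifferentiableOn ℂ (fun w => h (r n * w)) (closedBall 0 1) :=
    hh.1.comp (by fun_prop) fun w hw => dilation_mem n hw
  have dilation_le (n : ℕ) :
      ‖h (r n * z)‖ ≤ Real.exp (poissonIntegral (fun ζ => log⁺ ‖h (r n * ζ)‖) z) := by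
    refine norm_le_exp_poissonIntegral_of_forall_mem_sphere (h := fun w => h (r n * w))
      (DifferentiableOn.diffContOnCl ?_) ?_ (fun ζ _ => le_exp_posLog _) hz
    · rw [closure_ball _ one_ne_zero]
      exact dilation_differentiableOn n
    · exact continuous_posLog.comp_continuousOn
        ((dilation_differentiableOn n).continuousOn.mono sphere_subset_closedBall).norm
  have hz_tendsto : Tendsto (fun n => r n * z) atTop (𝓝 z) := by
    simpa using ((continuous_ofReal.tendsto 1).comp
      (tendsto_nhds_of_tendsto_nhdsWithin hr_tendsto)).mul_const z
  refine le_of_tendsto_of_tendsto' (((hh.1.continuousOn.continuousAt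
    (isOpen_ball.mem_nhds hz)).tendsto.comp hz_tendsto).norm) ?_ dilation_le
  exact (Real.continuous_exp.tendsto _).comp (tendsto_poissonIntegral
    (uniformIntegrable_posLog_norm_comp_mul_circleMap hh hr)
    (tendsto_posLog_norm_comp_mul_circleMap hlim hr_tendsto) hz)

theorem HasRadialLimits.const_smul (hlim : HasRadialLimits h) (c : ℂ) :
    HasBoundaryValues (c • h) fun θ => c • radialLimit h (circleMap 0 1 θ) :=
  Eventually.mono hlim fun _ hθ => hθ.const_smul c

theorem norm_radialLimit_exp_smul (hlim : HasRadialLimits h) (t : ℝ) :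
    ∀ᵐ θ ∂arcLength, ‖radialLimit ((Real.exp t : ℂ) • h) (circleMap 0 1 θ)‖ =
      Real.exp t * ‖radialLimit h (circleMap 0 1 θ)‖ := by
  filter_upwards [(hlim.const_smul (Real.exp t)).radialLimit_ae_eq] with θ hθ
  rw [hθ, norm_smul, norm_real, norm_of_nonneg (Real.exp_nonneg t)]

theorem circleIntegrable_posLog_exp_mul_norm_radialLimit (hh : h ∈ smirnovClass)
    (hlim : HasRadialLimits h) (t : ℝ) :
    CircleIntegrable (fun ζ => log⁺ (Real.exp t * ‖radialLimit h ζ‖)) 0 1 := by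
  rw [circleIntegrable_iff_integrable_arcLength]
  refine (circleIntegrable_iff_integrable_arcLength.1 (circleIntegrable_posLog_norm_radialLimit
    (smirnovClass.smul_mem hh _) (hlim.const_smul (Real.exp t)).hasRadialLimits)).congr ?_
  exact (norm_radialLimit_exp_smul hlim t).mono fun θ hθ => congrArg log⁺ hθ

theorem circleIntegrable_posLog_exp_mul_sub (hh : h ∈ smirnovClass) (hlim : HasRadialLimits h)
    (t : ℝ) : CircleIntegrable (fun ζ => log⁺ (Real.exp t * ‖radialLimit h ζ‖) - t) 0 1 :=
  (circleIntegrable_posLog_exp_mul_norm_radialLimit hh hlim t).sub (circleIntegrable_const t 0 1)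

-- For `t → ∞`, `log⁺ (exp t * x) - t = max (-t) (log x)` decreases to `log x`.
theorem norm_le_exp_poissonIntegral_posLog_exp_mul_sub (hh : h ∈ smirnovClass)
    (hlim : HasRadialLimits h) (t : ℝ) {z : ℂ} (hz : z ∈ ball (0 : ℂ) 1) :
    ‖h z‖ ≤ Real.exp (poissonIntegral (fun ζ => log⁺ (Real.exp t * ‖radialLimit h ζ‖) - t) z) := by
  have hsmul := norm_le_exp_poissonIntegral_posLog_radialLimit
    (smirnovClass.smul_mem hh (Real.exp t : ℂ)) (hlim.const_smul _).hasRadialLimits hz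
  rw [poissonIntegral_congr (v := fun ζ => log⁺ (Real.exp t * ‖radialLimit h ζ‖))
    ((norm_radialLimit_exp_smul hlim t).mono fun θ hθ => congrArg log⁺ hθ), Pi.smul_apply,
    norm_smul, norm_real, norm_of_nonneg (Real.exp_nonneg t), ← le_div_iff₀' (Real.exp_pos t),
    ← Real.exp_sub] at hsmul
  simpa only [sub_eq_add_neg, poissonIntegral_const (-t) hz, poissonIntegral_add
    (circleIntegrable_posLog_exp_mul_norm_radialLimit hh hlim t) (circleIntegrable_const (-t) 0 1)
    hz] using hsmul

theorem posLog_exp_mul_sub {x : ℝ} (hx : 0 < x) (t : ℝ) :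
    log⁺ (Real.exp t * x) - t = max (-t) (Real.log x) := by
  rw [posLog_apply, Real.log_mul (Real.exp_ne_zero t) hx.ne', Real.log_exp, ← max_sub_sub_right,
    zero_sub, add_sub_cancel_left]

theorem tendsto_posLog_exp_mul_sub {x : ℝ} (hx : 0 < x) :
    Tendsto (fun n : ℕ => log⁺ (Real.exp n * x) - n) atTop (𝓝 (Real.log x)) := by
  simp only [posLog_exp_mul_sub hx]
  refine tendsto_const_nhds.congr' ?_
  filter_upwards [tendsto_natCast_atTop_atTop.eventually_ge_atTop (-Real.log x)] with n hn
  rw [max_eq_right (neg_le.1 hn)]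

theorem norm_le_exp_poissonIntegral_of_norm_radialLimit_le (hh : h ∈ smirnovClass)
    (hlim : HasRadialLimits h) {w : ℂ → ℝ} (hw : CircleIntegrable w 0 1)
    (hle : ∀ᵐ θ ∂arcLength, ‖radialLimit h (circleMap 0 1 θ)‖ ≤ Real.exp (w (circleMap 0 1 θ)))
    {z : ℂ} (hz : z ∈ ball (0 : ℂ) 1) : ‖h z‖ ≤ Real.exp (poissonIntegral w z) := by
  let wTrunc (n : ℕ) (ζ : ℂ) : ℝ := log⁺ (Real.exp n * Real.exp (w ζ)) - n
  have wTrunc_eq (n : ℕ) (ζ : ℂ) : wTrunc n ζ = max (-(n : ℝ)) (w ζ) := by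
    simp only [wTrunc, posLog_exp_mul_sub (Real.exp_pos _), Real.log_exp]
  have hw_int := circleIntegrable_iff_integrable_arcLength.1 hw
  have hunif : UniformIntegrable (fun n θ => wTrunc n (circleMap 0 1 θ)) 1 arcLength := by
    refine uniformIntegrable_of_norm_le (uniformIntegrable_const le_rfl ENNReal.one_ne_top
      (memLp_one_iff_integrable.2 hw_int)) (fun n => ?_) fun n θ => ?_
    · simp only [wTrunc_eq]
      exact aestronglyMeasurable_const.sup hw_int.1
    · rw [wTrunc_eq, Real.norm_eq_abs, Real.norm_eq_abs]
      exact abs_le.2 ⟨(neg_abs_le _).trans (le_max_right _ _),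
        max_le ((neg_nonpos.2 n.cast_nonneg).trans (abs_nonneg _)) (le_abs_self _)⟩
  have hbound (n : ℕ) : ‖h z‖ ≤ Real.exp (poissonIntegral (wTrunc n) z) := by
    refine (norm_le_exp_poissonIntegral_posLog_exp_mul_sub hh hlim n hz).trans
      (Real.exp_le_exp.2 (poissonIntegral_mono
        (circleIntegrable_posLog_exp_mul_sub hh hlim n)
        (circleIntegrable_iff_integrable_arcLength.2
          (memLp_one_iff_integrable.1 (hunif.memLp n))) ?_ hz))
    filter_upwards [hle] with θ hθ
    exact sub_le_sub_right (posLog_le_posLog (by positivity) (by gcongr)) _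
  refine ge_of_tendsto' ((Real.continuous_exp.tendsto _).comp (tendsto_poissonIntegral hunif
    (ae_of_all _ fun θ => ?_) hz)) hbound
  simpa only [Real.log_exp] using tendsto_posLog_exp_mul_sub (Real.exp_pos (w (circleMap 0 1 θ)))

end SmirnovInequality

section OuterFunction

variable {f : ℂ → ℂ}

theorem abs_posLog_exp_mul_sub_le {x t : ℝ} (hx : 0 ≤ x) (ht : 0 ≤ t) :
    |log⁺ (Real.exp t * x) - t| ≤ 2 * log⁺ x - (log⁺ (Real.exp t * x) - t) := by
  have hle : log⁺ (Real.exp t * x) - t ≤ log⁺ x := by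
    rcases hx.eq_or_lt with rfl | hx
    · simpa using ht
    · rw [posLog_exp_mul_sub hx]
      exact max_le_max_right _ (neg_nonpos.2 ht)
  have hnonneg : 0 ≤ log⁺ x := posLog_nonneg
  exact abs_le.2 ⟨by linarith, by linarith⟩

theorem lintegral_enorm_comp_circleMap {u : ℂ → ℝ} (hu : CircleIntegrable u 0 1) :
    ∫⁻ θ, ‖u (circleMap 0 1 θ)‖ₑ ∂arcLength =
      ENNReal.ofReal (2 * π * circleAverage (fun ζ => |u ζ|) 0 1) := by
  rw [circleAverage_def, smul_eq_mul, mul_inv_cancel_left₀ two_pi_pos.ne',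
    intervalIntegral.integral_of_le two_pi_pos.le]
  simpa only [Real.norm_eq_abs] using
    (ofReal_integral_norm_eq_lintegral_enorm (circleIntegrable_iff_integrable_arcLength.1 hu)).symm

-- The integrals of the truncated logarithms are at least `2π log ‖f 0‖`, while their positive
-- parts are bounded by `log⁺ ‖f*‖`.
theorem exists_lintegral_enorm_posLog_exp_mul_sub_le (hf : f ∈ smirnovClass)
    (hlim : HasRadialLimits f) (hf0 : f 0 ≠ 0) : ∃ C : ℝ≥0, ∀ n : ℕ,
      ∫⁻ θ, ‖log⁺ (Real.exp n * ‖radialLimit f (circleMap 0 1 θ)‖) - n‖ₑ ∂arcLength ≤ C := by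
  refine ⟨(2 * π * (2 * circleAverage (fun ζ => log⁺ ‖radialLimit f ζ‖) 0 1
    - Real.log ‖f 0‖)).toNNReal, fun n => ?_⟩
  let logTrunc (ζ : ℂ) : ℝ := log⁺ (Real.exp n * ‖radialLimit f ζ‖) - n
  have htrunc : CircleIntegrable logTrunc 0 1 := circleIntegrable_posLog_exp_mul_sub hf hlim n
  have htwo : CircleIntegrable (fun ζ => (2 : ℝ) • log⁺ ‖radialLimit f ζ‖) 0 1 :=
    (circleIntegrable_posLog_norm_radialLimit hf hlim).const_smul
  have hjensen : Real.log ‖f 0‖ ≤ circleAverage logTrunc 0 1 := by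
    rw [Real.log_le_iff_le_exp (norm_pos_iff.2 hf0), ← poissonIntegral_zero]
    exact norm_le_exp_poissonIntegral_posLog_exp_mul_sub hf hlim n (mem_ball_self one_pos)
  rw [lintegral_enorm_comp_circleMap htrunc]
  refine ENNReal.ofReal_le_ofReal (mul_le_mul_of_nonneg_left ?_ two_pi_pos.le)
  calc circleAverage (fun ζ => |logTrunc ζ|) 0 1
      ≤ circleAverage (fun ζ => (2 : ℝ) • log⁺ ‖radialLimit f ζ‖ - logTrunc ζ) 0 1 :=
        circleAverage_mono htrunc.abs (htwo.sub htrunc) fun ζ _ =>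
          abs_posLog_exp_mul_sub_le (norm_nonneg _) n.cast_nonneg
    _ = 2 * circleAverage (fun ζ => log⁺ ‖radialLimit f ζ‖) 0 1 - circleAverage logTrunc 0 1 := by
        rw [circleAverage_fun_sub htwo htrunc, circleAverage_fun_smul, smul_eq_mul]
    _ ≤ _ := sub_le_sub_left hjensen _

-- Chebyshev's inequality: at a zero of `f*` the `n`-th truncated logarithm is `-n`.
theorem ae_radialLimit_ne_zero (hf : f ∈ smirnovClass) (hlim : HasRadialLimits f)
    (hf0 : f 0 ≠ 0) : ∀ᵐ θ ∂arcLength, radialLimit f (circleMap 0 1 θ) ≠ 0 := by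
  obtain ⟨C, hC⟩ := exists_lintegral_enorm_posLog_exp_mul_sub_le hf hlim hf0
  by_contra hne
  obtain ⟨n, hn⟩ :=
    ENNReal.exists_nat_mul_gt (fun h => hne (ae_iff.2 h)) (ENNReal.coe_ne_top (r := C))
  have hmeas := (circleIntegrable_iff_integrable_arcLength.1
    (circleIntegrable_posLog_exp_mul_sub hf hlim n)).1.enorm
  have hsub : {θ | ¬ radialLimit f (circleMap 0 1 θ) ≠ 0} ⊆
      {θ | n ≤ ‖log⁺ (Real.exp n * ‖radialLimit f (circleMap 0 1 θ)‖) - n‖ₑ} := fun θ hθ => by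
    simp [not_not.1 hθ]
  refine hn.not_ge (le_trans ?_ ((mul_meas_ge_le_lintegral₀ hmeas n).trans (hC n)))
  gcongr

theorem circleIntegrable_log_norm_radialLimit (hf : f ∈ smirnovClass) (hlim : HasRadialLimits f)
    (hf0 : f 0 ≠ 0) : CircleIntegrable (fun ζ => Real.log ‖radialLimit f ζ‖) 0 1 := by
  obtain ⟨C, hC⟩ := exists_lintegral_enorm_posLog_exp_mul_sub_le hf hlim hf0
  have htendsto := (ae_radialLimit_ne_zero hf hlim hf0).mono fun θ hθ =>
    tendsto_posLog_exp_mul_sub (norm_pos_iff.2 hθ)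
  refine circleIntegrable_iff_integrable_arcLength.2 (integrable_of_tendsto htendsto
    (fun n => ?_) ?_)
  · exact (circleIntegrable_iff_integrable_arcLength.1
      (circleIntegrable_posLog_exp_mul_sub hf hlim n)).1
  · exact ((liminf_le_of_frequently_le' (.of_forall hC)).trans_lt ENNReal.coe_lt_top).ne

/-- Outer functions of the Smirnov class: equality holds at the origin in Jensen's inequality for
the radial boundary values. -/
structure IsOuter (f : ℂ → ℂ) : Prop where
  mem_smirnovClass : f ∈ smirnovClass
  hasRadialLimits : HasRadialLimits f
  norm_apply_zero :
    ‖f 0‖ = Real.exp (circleAverage (fun ζ => Real.log ‖radialLimit f ζ‖) 0 1)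

theorem exists_differentiableOn_norm_eq_exp_poissonIntegral {w : ℂ → ℝ}
    (hw : CircleIntegrable w 0 1) :
    ∃ E : ℂ → ℂ, DifferentiableOn ℂ E (ball 0 1) ∧
      ∀ z ∈ ball (0 : ℂ) 1, ‖E z‖ = Real.exp (poissonIntegral w z) := by
  have hw_complex : CircleIntegrable (fun ζ => (w ζ : ℂ)) 0 1 :=
    circleIntegrable_iff_integrable_arcLength.2
      (circleIntegrable_iff_integrable_arcLength.1 hw).ofReal
  refine ⟨fun z => Complex.exp (circleAverage (fun ζ => herglotzRieszKernel 0 z ζ • (w ζ : ℂ)) 0 1),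
    (differentiableOn_circleAverage_herglotzRieszKernel_smul hw_complex).cexp, fun z hz => ?_⟩
  rw [Complex.norm_exp, re_circleAverage_herglotzRieszKernel_smul hw hz,
    ← poissonKernel_eq_re_herglotzRieszKernel]
  rfl

namespace IsOuter

theorem apply_zero_ne_zero (hf : IsOuter f) : f 0 ≠ 0 :=
  norm_pos_iff.1 (hf.norm_apply_zero ▸ Real.exp_pos _)

theorem radialLimit_ne_zero (hf : IsOuter f) :
    ∀ᵐ θ ∂arcLength, radialLimit f (circleMap 0 1 θ) ≠ 0 :=
  ae_radialLimit_ne_zero hf.mem_smirnovClass hf.hasRadialLimits hf.apply_zero_ne_zero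

theorem circleIntegrable_log_norm (hf : IsOuter f) :
    CircleIntegrable (fun ζ => Real.log ‖radialLimit f ζ‖) 0 1 :=
  circleIntegrable_log_norm_radialLimit hf.mem_smirnovClass hf.hasRadialLimits
    hf.apply_zero_ne_zero

theorem norm_le_exp_poissonIntegral (hf : IsOuter f) {h : ℂ → ℂ} (hh : h ∈ smirnovClass)
    (hlim : HasRadialLimits h) (hle : ∀ᵐ θ ∂arcLength,
      ‖radialLimit h (circleMap 0 1 θ)‖ ≤ ‖radialLimit f (circleMap 0 1 θ)‖)
    {z : ℂ} (hz : z ∈ ball (0 : ℂ) 1) :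
    ‖h z‖ ≤ Real.exp (poissonIntegral (fun ζ => Real.log ‖radialLimit f ζ‖) z) := by
  refine norm_le_exp_poissonIntegral_of_norm_radialLimit_le hh hlim hf.circleIntegrable_log_norm
    ?_ hz
  filter_upwards [hle, hf.radialLimit_ne_zero] with θ hθ hne
  rwa [Real.exp_log (norm_pos_iff.2 hne)]

-- The quotient of `f` by the outer function built from `log ‖f*‖` has norm at most one, and
-- attains it at the origin.
theorem norm_eq_exp_poissonIntegral (hf : IsOuter f) {z : ℂ} (hz : z ∈ ball (0 : ℂ) 1) :
    ‖f z‖ = Real.exp (poissonIntegral (fun ζ => Real.log ‖radialLimit f ζ‖) z) := by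
  obtain ⟨E, hE, hE_norm⟩ :=
    exists_differentiableOn_norm_eq_exp_poissonIntegral hf.circleIntegrable_log_norm
  have hE_pos (w : ℂ) (hw : w ∈ ball (0 : ℂ) 1) : 0 < ‖E w‖ := hE_norm w hw ▸ Real.exp_pos _
  have quot_zero : ‖f 0 / E 0‖ = 1 := by
    rw [norm_div, div_eq_one_iff_eq (hE_pos 0 (mem_ball_self one_pos)).ne',
      hE_norm 0 (mem_ball_self one_pos), poissonIntegral_zero, hf.norm_apply_zero]
  have quot_isMaxOn : IsMaxOn (norm ∘ fun w => f w / E w) (ball 0 1) 0 := fun w hw => by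
    rw [mem_ofPred_eq, Function.comp_apply, Function.comp_apply, quot_zero, norm_div,
      div_le_one (hE_pos w hw), hE_norm w hw]
    exact hf.norm_le_exp_poissonIntegral hf.mem_smirnovClass hf.hasRadialLimits
      (ae_of_all _ fun _ => le_rfl) hw
  have quot_norm : ‖f z / E z‖ = ‖f 0 / E 0‖ := norm_eqOn_of_isPreconnected_of_isMaxOn
    (convex_ball 0 1).isPreconnected isOpen_ball
    (hf.mem_smirnovClass.1.div hE fun w hw => norm_pos_iff.1 (hE_pos w hw))
    (mem_ball_self one_pos) quot_isMaxOn hz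
  rwa [quot_zero, norm_div, div_eq_one_iff_eq (hE_pos z hz).ne', hE_norm z hz] at quot_norm

theorem ne_zero (hf : IsOuter f) {z : ℂ} (hz : z ∈ ball (0 : ℂ) 1) : f z ≠ 0 :=
  norm_pos_iff.1 (hf.norm_eq_exp_poissonIntegral hz ▸ Real.exp_pos _)

theorem norm_le_norm (hf : IsOuter f) {h : ℂ → ℂ} (hh : h ∈ smirnovClass)
    (hlim : HasRadialLimits h) (hle : ∀ᵐ θ ∂arcLength,
      ‖radialLimit h (circleMap 0 1 θ)‖ ≤ ‖radialLimit f (circleMap 0 1 θ)‖)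
    {z : ℂ} (hz : z ∈ ball (0 : ℂ) 1) : ‖h z‖ ≤ ‖f z‖ :=
  (hf.norm_le_exp_poissonIntegral hh hlim hle hz).trans_eq (hf.norm_eq_exp_poissonIntegral hz).symm

end IsOuter

end OuterFunction

section MatrixFunctions

variable {n R A X : Type*} [Fintype n] [CommRing R] [CommRing A] [Algebra R A]

theorem mul_apply_mem_subalgebra (S : Subalgebra R (X → A)) {M P : X → Matrix n n A}
    (hM : ∀ i j, (fun x => M x i j) ∈ S) (hP : ∀ i j, (fun x => P x i j) ∈ S) (i j : n) :
    (fun x => (M x * P x) i j) ∈ S := by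
  have hsum : (fun x => (M x * P x) i j) = ∑ k, (fun x => M x i k) * fun x => P x k j := by
    ext x
    simp only [mul_apply, Finset.sum_apply, Pi.mul_apply]
  exact hsum ▸ S.sum_mem fun k _ => S.mul_mem (hM i k) (hP k j)

variable [DecidableEq n]

-- A matrix of functions in `S` is a matrix over the ring `S`, and evaluation is a ring morphism.
theorem det_mem_subalgebra (S : Subalgebra R (X → A)) {M : X → Matrix n n A}
    (hM : ∀ i j, (fun x => M x i j) ∈ S) : (fun x => (M x).det) ∈ S := by
  let MS : Matrix n n S := of fun i j => ⟨fun x => M x i j, hM i j⟩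
  have heval : (fun x => (M x).det) = MS.det := funext fun x =>
    (((Pi.evalRingHom (fun _ => A) x).comp S.val.toRingHom).map_det MS).symm
  exact heval ▸ MS.det.2

theorem adjugate_mem_subalgebra (S : Subalgebra R (X → A)) {M : X → Matrix n n A}
    (hM : ∀ i j, (fun x => M x i j) ∈ S) (i j : n) : (fun x => (M x).adjugate i j) ∈ S := by
  let MS : Matrix n n S := of fun i j => ⟨fun x => M x i j, hM i j⟩
  have heval : (fun x => (M x).adjugate i j) = MS.adjugate i j := funext fun x =>
    (congrFun₂ (((Pi.evalRingHom (fun _ => A) x).comp S.val.toRingHom).map_adjugate MS) i j).symm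
  exact heval ▸ (MS.adjugate i j).2

theorem inv_mul_apply {K : Type*} [Field K] (M P : Matrix n n K) (i j : n) :
    (M⁻¹ * P) i j = M.det⁻¹ * (M.adjugate * P) i j := by
  rw [Matrix.inv_def, Ring.inverse_eq_inv', Matrix.smul_mul, Matrix.smul_apply, smul_eq_mul]

theorem inv_mul_mem_unitaryGroup [StarRing A] {M P : Matrix n n A} (hM : IsUnit M.det)
    (hMP : M * Mᴴ = P * Pᴴ) : M⁻¹ * P ∈ unitaryGroup n A := by
  have hM_star : IsUnit Mᴴ.det := by
    rw [det_conjTranspose]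
    exact hM.star
  rw [mem_unitaryGroup_iff, star_eq_conjTranspose]
  calc M⁻¹ * P * (M⁻¹ * P)ᴴ = M⁻¹ * (P * Pᴴ) * (Mᴴ)⁻¹ := by
        rw [conjTranspose_mul, conjTranspose_nonsing_inv]
        simp only [Matrix.mul_assoc]
    _ = M⁻¹ * M * (Mᴴ * (Mᴴ)⁻¹) := by
        rw [← hMP]
        simp only [Matrix.mul_assoc]
    _ = 1 := by rw [nonsing_inv_mul _ hM, mul_nonsing_inv _ hM_star, one_mul]

theorem norm_adjugate_mul_apply_le {M P : Matrix n n ℂ} (hM : M.det ≠ 0)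
    (hMP : M * Mᴴ = P * Pᴴ) (i j : n) : ‖(M.adjugate * P) i j‖ ≤ ‖M.det‖ := by
  have hentry := entry_norm_bound_of_unitary (inv_mul_mem_unitaryGroup hM.isUnit hMP) i j
  rwa [inv_mul_apply, norm_mul, norm_inv, inv_mul_le_iff₀ (norm_pos_iff.2 hM), mul_one] at hentry

end MatrixFunctions

section MatrixBoundaryValues

variable {n : Type*} {F G : ℂ → Matrix n n ℂ}
  {FStar GStar : ℝ → Matrix n n ℂ}

theorem ae_arcLength_iff {p : ℝ → Prop} :
    (∀ᵐ θ ∂arcLength, p θ) ↔ ∀ᵐ θ ∂volume.restrict (Ico 0 (2 * π)), p θ := by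
  rw [restrict_Ico_eq_restrict_Ioc]

theorem hasBoundaryValues_matrix_iff : HasBoundaryValues F FStar ↔
    ∀ᵐ θ : ℝ ∂volume.restrict (Ico 0 (2 * π)), ∀ i j,
      Tendsto (fun r : ℝ => F (r * Complex.exp (θ * Complex.I)) i j) (𝓝[<] 1)
        (𝓝 (FStar θ i j)) := by
  refine Iff.trans ?_ ae_arcLength_iff
  refine eventually_congr (.of_forall fun θ => ?_)
  simp only [circleMap_zero, ofReal_one, one_mul]
  exact tendsto_pi_nhds.trans (forall_congr' fun _ => tendsto_pi_nhds)

theorem apply_mem_smirnovClass_of_summable_sq {A : ℕ → Matrix n n ℂ}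
    (hF : ∀ z ∈ ball (0 : ℂ) 1, HasSum (fun k => z ^ k • A k) (F z))
    (hA : ∀ i j, Summable fun k => ‖A k i j‖ ^ 2) (i j : n) :
    (fun z => F z i j) ∈ smirnovClass :=
  mem_smirnovClass_of_summable_sq
    (fun z hz => Pi.hasSum.1 (Pi.hasSum.1 (hF z hz) i) j) (hA i j)

theorem HasBoundaryValues.apply (hF : HasBoundaryValues F FStar) (i j : n) :
    HasBoundaryValues (fun z => F z i j) fun θ => FStar θ i j :=
  Eventually.mono hF fun _ hθ =>
    tendsto_pi_nhds.1 (tendsto_pi_nhds.1 hθ i) j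

variable [Fintype n]

theorem HasBoundaryValues.matrix_mul (hF : HasBoundaryValues F FStar)
    (hG : HasBoundaryValues G GStar) :
    HasBoundaryValues (fun z => F z * G z) fun θ => FStar θ * GStar θ := by
  filter_upwards [hF, hG] with θ hFθ hGθ using hFθ.mul hGθ

variable [DecidableEq n]

theorem HasBoundaryValues.det (hF : HasBoundaryValues F FStar) :
    HasBoundaryValues (fun z => (F z).det) fun θ => (FStar θ).det :=
  Eventually.mono hF fun _ hθ => (continuous_id.matrix_det.tendsto _).comp hθ

theorem HasBoundaryValues.adjugate (hF : HasBoundaryValues F FStar) :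
    HasBoundaryValues (fun z => (F z).adjugate) fun θ => (FStar θ).adjugate :=
  Eventually.mono hF fun _ hθ => (continuous_id.matrix_adjugate.tendsto _).comp hθ

theorem HasBoundaryValues.inv (hF : HasBoundaryValues F FStar)
    (hdet : ∀ᵐ θ ∂arcLength, (FStar θ).det ≠ 0) :
    HasBoundaryValues (fun z => (F z)⁻¹) fun θ => (FStar θ)⁻¹ := by
  filter_upwards [hF, hdet] with θ hθ hne
  refine (continuousAt_matrix_inv _ ?_).tendsto.comp hθ
  rw [Ring.inverse_eq_inv']
  exact continuousAt_inv₀ hne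

theorem circleAverage_log_norm_radialLimit {f : ℂ → ℂ} {b : ℝ → ℂ} (hb : HasBoundaryValues f b) :
    circleAverage (fun ζ => Real.log ‖radialLimit f ζ‖) 0 1 =
      (2 * π)⁻¹ * ∫ θ in (0 : ℝ)..(2 * π), Real.log ‖b θ‖ := by
  rw [circleAverage_def, smul_eq_mul, intervalIntegral.integral_of_le two_pi_pos.le,
    intervalIntegral.integral_of_le two_pi_pos.le]
  congr 1
  refine integral_congr_ae ?_
  filter_upwards [hb.radialLimit_ae_eq] with θ hθ
  rw [hθ]

theorem isOuter_det (hF : ∀ i j, (fun z => F z i j) ∈ smirnovClass)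
    (hFStar : HasBoundaryValues F FStar)
    (hdet : ‖(F 0).det‖ =
      Real.exp ((2 * π)⁻¹ * ∫ θ in (0 : ℝ)..(2 * π), Real.log ‖(FStar θ).det‖)) :
    IsOuter fun z => (F z).det where
  mem_smirnovClass := det_mem_subalgebra smirnovClass hF
  hasRadialLimits := hFStar.det.hasRadialLimits
  norm_apply_zero := by rw [hdet, circleAverage_log_norm_radialLimit hFStar.det]

theorem IsOuter.ae_det_ne_zero (hdet : IsOuter fun z => (F z).det)
    (hFStar : HasBoundaryValues F FStar) : ∀ᵐ θ ∂arcLength, (FStar θ).det ≠ 0 := by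
  filter_upwards [hdet.radialLimit_ne_zero, hFStar.det.radialLimit_ae_eq] with θ hne heq
  rwa [← heq]

theorem norm_adjugate_mul_apply_le_norm_det (hF : ∀ i j, (fun z => F z i j) ∈ smirnovClass)
    (hG : ∀ i j, (fun z => G z i j) ∈ smirnovClass) (hFStar : HasBoundaryValues F FStar)
    (hGStar : HasBoundaryValues G GStar)
    (hmod : ∀ᵐ θ ∂arcLength, FStar θ * (FStar θ)ᴴ = GStar θ * (GStar θ)ᴴ)
    (hdet : IsOuter fun z => (F z).det) {z : ℂ} (hz : z ∈ ball (0 : ℂ) 1) (i j : n) :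
    ‖((F z).adjugate * G z) i j‖ ≤ ‖(F z).det‖ := by
  have hadj := (hFStar.adjugate.matrix_mul hGStar).apply i j
  refine hdet.norm_le_norm (mul_apply_mem_subalgebra smirnovClass
    (adjugate_mem_subalgebra smirnovClass hF) hG i j) hadj.hasRadialLimits ?_ hz
  filter_upwards [hadj.radialLimit_ae_eq, hFStar.det.radialLimit_ae_eq, hmod,
    hdet.ae_det_ne_zero hFStar] with θ hadjθ hdetθ hmodθ hne
  rw [hadjθ, hdetθ]
  exact norm_adjugate_mul_apply_le hne hmodθ i j

end MatrixBoundaryValues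

theorem quotient_is_inner_general {n : Type*} [Fintype n] [DecidableEq n]
    (F G : ℂ → Matrix n n ℂ) (FStar GStar : ℝ → Matrix n n ℂ)
    (hF : ∀ i j, (fun z => F z i j) ∈ smirnovClass)
    (hG : ∀ i j, (fun z => G z i j) ∈ smirnovClass)
    (hFStar : HasBoundaryValues F FStar) (hGStar : HasBoundaryValues G GStar)
    (hmod : ∀ᵐ θ ∂arcLength, FStar θ * (FStar θ)ᴴ = GStar θ * (GStar θ)ᴴ)
    (houter : ‖(F 0).det‖ =
      Real.exp ((2 * π)⁻¹ * ∫ θ in (0 : ℝ)..(2 * π), Real.log ‖(FStar θ).det‖)) :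
    (∀ i j, DifferentiableOn ℂ (fun z => ((F z)⁻¹ * G z) i j) (ball 0 1)) ∧
    (∀ z ∈ ball (0 : ℂ) 1, ∀ i j, ‖((F z)⁻¹ * G z) i j‖ ≤ 1) ∧
    HasBoundaryValues (fun z => (F z)⁻¹ * G z) (fun θ => (FStar θ)⁻¹ * GStar θ) ∧
    ∀ᵐ θ ∂arcLength, (FStar θ)⁻¹ * GStar θ ∈ unitaryGroup n ℂ := by
  have hdet : IsOuter fun z => (F z).det := isOuter_det hF hFStar houter
  have hdetStar := hdet.ae_det_ne_zero hFStar
  refine ⟨fun i j => ?_, fun z hz i j => ?_, (hFStar.inv hdetStar).matrix_mul hGStar, ?_⟩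
  · simp only [inv_mul_apply]
    exact (hdet.mem_smirnovClass.1.inv fun z hz => hdet.ne_zero hz).mul
      (mul_apply_mem_subalgebra smirnovClass (adjugate_mem_subalgebra smirnovClass hF) hG i j).1
  · rw [inv_mul_apply, norm_mul, norm_inv]
    exact inv_mul_le_one_of_le₀ (norm_adjugate_mul_apply_le_norm_det hF hG hFStar hGStar hmod hdet
      hz i j) (norm_nonneg _)
  · filter_upwards [hmod, hdetStar] with θ hmodθ hne
    exact inv_mul_mem_unitaryGroup hne.isUnit hmodθ

/-- Let `F, G ∈ H₂^{d×d}` (matrix Taylor coefficients `A`, `B`, with each entry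
in `H₂`) have entrywise radial boundary values `FStar`, `GStar` with
`F* (F*)ᴴ = G* (G*)ᴴ` a.e. on `[0, 2π)`, and suppose `F` is outer, i.e. `det F`
is an outer function: `|det F 0| = exp((2π)⁻¹ ∫₀^{2π} log |det F*(e^{iθ})| dθ)`
(so that in particular `det F z ≠ 0` and `F z` is invertible on the disk).
Then the matrix function `U z = (F z)⁻¹ * G z` is analytic on the disk, belongs
to `H_∞^{d×d}`, and is an inner matrix function: its boundary values satisfy
`U* (U*)ᴴ = I` a.e. -/
theorem quotient_is_inner {d : ℕ}
    (F G : ℂ → Matrix (Fin d) (Fin d) ℂ)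
    (A B : ℕ → Matrix (Fin d) (Fin d) ℂ)
    (FStar GStar : ℝ → Matrix (Fin d) (Fin d) ℂ)
    (hFA : ∀ z ∈ Metric.ball (0 : ℂ) 1, HasSum (fun n : ℕ => z ^ n • A n) (F z))
    (hGB : ∀ z ∈ Metric.ball (0 : ℂ) 1, HasSum (fun n : ℕ => z ^ n • B n) (G z))
    (hA2 : ∀ i j, Summable fun n : ℕ => ‖A n i j‖ ^ 2)
    (hB2 : ∀ i j, Summable fun n : ℕ => ‖B n i j‖ ^ 2)
    (hFStar : ∀ᵐ (θ : ℝ) ∂(volume.restrict (Ico (0 : ℝ) (2 * Real.pi))),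
      ∀ i j, Tendsto (fun r : ℝ => F ((r : ℂ) * Complex.exp ((θ : ℂ) * Complex.I)) i j)
        (nhdsWithin 1 (Iio 1)) (nhds (FStar θ i j)))
    (hGStar : ∀ᵐ (θ : ℝ) ∂(volume.restrict (Ico (0 : ℝ) (2 * Real.pi))),
      ∀ i j, Tendsto (fun r : ℝ => G ((r : ℂ) * Complex.exp ((θ : ℂ) * Complex.I)) i j)
        (nhdsWithin 1 (Iio 1)) (nhds (GStar θ i j)))
    (hmod : ∀ᵐ (θ : ℝ) ∂(volume.restrict (Ico (0 : ℝ) (2 * Real.pi))),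
      FStar θ * (FStar θ)ᴴ = GStar θ * (GStar θ)ᴴ)
    (houter : ‖(F 0).det‖ =
      Real.exp ((2 * Real.pi)⁻¹ *
        ∫ θ in (0 : ℝ)..(2 * Real.pi), Real.log ‖(FStar θ).det‖)) :
    (∀ i j, DifferentiableOn ℂ (fun z => ((F z)⁻¹ * G z) i j) (Metric.ball (0 : ℂ) 1)) ∧
    (∃ C : ℝ, ∀ z ∈ Metric.ball (0 : ℂ) 1, ∀ i j, ‖((F z)⁻¹ * G z) i j‖ ≤ C) ∧
    (∃ UStar : ℝ → Matrix (Fin d) (Fin d) ℂ,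
      (∀ᵐ (θ : ℝ) ∂(volume.restrict (Ico (0 : ℝ) (2 * Real.pi))),
        ∀ i j, Tendsto
          (fun r : ℝ =>
            ((F ((r : ℂ) * Complex.exp ((θ : ℂ) * Complex.I)))⁻¹ *
              G ((r : ℂ) * Complex.exp ((θ : ℂ) * Complex.I))) i j)
          (nhdsWithin 1 (Iio 1)) (nhds (UStar θ i j))) ∧
      (∀ᵐ (θ : ℝ) ∂(volume.restrict (Ico (0 : ℝ) (2 * Real.pi))),
        UStar θ * (UStar θ)ᴴ = (1 : Matrix (Fin d) (Fin d) ℂ))) := by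
  have ⟨hdiff, hle, hlim, hunitary⟩ := quotient_is_inner_general F G FStar GStar
    (apply_mem_smirnovClass_of_summable_sq hFA hA2) (apply_mem_smirnovClass_of_summable_sq hGB hB2)
    (hasBoundaryValues_matrix_iff.2 hFStar) (hasBoundaryValues_matrix_iff.2 hGStar)
    (ae_arcLength_iff.2 hmod) houter
  have hUStar := hasBoundaryValues_matrix_iff.1 hlim
  exact ⟨hdiff, ⟨1, hle⟩, _, hUStar, (ae_arcLength_iff.1 hunitary).mono fun _ hU =>
    mem_unitaryGroup_iff.1 hU⟩
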